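/- Fix β > 0, d ≥ 1, s ≥ 0 and u ≥ ℓ ≥ 0, and suppose f ∈ A(s, ℓ, u). Then for all R > 0 and all p ≥ p_M(s, ℓ) there exists a constant L_M = L_M(p, R) > 0 such that for all probability measures μ, ν ∈ P_{p,R}(ℝ^d), |M_β(μ) − M_β(ν)| ≤ L_M · W_p(μ, ν). -/

import Mathlib

open MeasureTheory ENNReal
open scoped NNReal

noncomputable section

/-- Euclidean space `ℝ^d`. -/
abbrev Rd (d : ℕ) := EuclideanSpace ℝ (Fin d)

/-- The weight function `x ↦ exp (-β f x)`. -/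
def wFn (β : ℝ) {d : ℕ} (f : Rd d → ℝ) (x : Rd d) : ℝ := Real.exp (-β * f x)

/-- The weighted mean `M_β(μ) = (∫ x e^{-β f x} dμ) / (∫ e^{-β f x} dμ)`. -/
def wMean (β : ℝ) {d : ℕ} (f : Rd d → ℝ) (μ : Measure (Rd d)) : Rd d :=
  (∫ x, wFn β f x ∂μ)⁻¹ • ∫ x, wFn β f x • x ∂μ

/-- The weighted covariance `C_β(μ)`, a `d × d` matrix. -/
def wCov (β : ℝ) {d : ℕ} (f : Rd d → ℝ) (μ : Measure (Rd d)) :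
    Matrix (Fin d) (Fin d) ℝ := fun i j =>
  (∫ x, wFn β f x ∂μ)⁻¹ *
    ∫ x, wFn β f x * ((x i - wMean β f μ i) * (x j - wMean β f μ j)) ∂μ

/-- Frobenius norm of a matrix. -/
def frobNorm {m n : ℕ} (A : Matrix (Fin m) (Fin n) ℝ) : ℝ :=
  Real.sqrt (∑ i, ∑ j, (A i j) ^ 2)

/-- `S` is the (unique) positive semidefinite square root of `A`. -/
def IsPSDSqrt {d : ℕ} (S A : Matrix (Fin d) (Fin d) ℝ) : Prop :=
  S.PosSemidef ∧ S * S = A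

/-- `μ ∈ P_{p,R}`: the `p`-th moment of `μ` is bounded, `(∫ |x|^p dμ)^{1/p} ≤ R`. -/
def MomLE (p R : ℝ) {d : ℕ} (μ : Measure (Rd d)) : Prop :=
  ∫⁻ x, (‖x‖₊ : ℝ≥0∞) ^ p ∂μ ≤ ENNReal.ofReal (R ^ p)

/-- `μ ∈ P_p`: the `p`-th moment of `μ` is finite. -/
def MomFin (p : ℝ) {d : ℕ} (μ : Measure (Rd d)) : Prop :=
  ∫⁻ x, (‖x‖₊ : ℝ≥0∞) ^ p ∂μ < ⊤

/-- The Wasserstein-`p` distance between two probability measures on `ℝ^d`: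
the infimum over couplings `π` of `μ` and `ν` of `(∬ |x - y|^p dπ)^{1/p}`. -/
def Wp (p : ℝ) {d : ℕ} (μ ν : Measure (Rd d)) : ℝ :=
  (sInf {c : ℝ≥0∞ | ∃ π : Measure (Rd d × Rd d),
      π.map Prod.fst = μ ∧ π.map Prod.snd = ν ∧
      c = (∫⁻ z, (‖z.1 - z.2‖₊ : ℝ≥0∞) ^ p ∂π) ^ (1 / p)}).toReal

/-- `f_* = inf f`. -/
def fStar {d : ℕ} (f : Rd d → ℝ) : ℝ := sInf (Set.range f)

/-- The class `A(s, ℓ, u)` of objective functions: `f` is bounded from below,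
locally Lipschitz with growth exponent `s`, and `f - inf f` grows at least like
`|x|^ℓ` and at most like `|x|^u`. -/
structure ClassA {d : ℕ} (s ℓ u : ℝ) (f : Rd d → ℝ) : Prop where
  bddBelow : BddBelow (Set.range f)
  lip : ∃ Lf > 0, ∀ x y : Rd d, |f x - f y| ≤ Lf * (1 + ‖x‖ + ‖y‖) ^ s * ‖x - y‖
  growth_lower : ∃ cl > 0, ∃ Cl > 0, ∀ x : Rd d, cl * ‖x‖ ^ ℓ - Cl ≤ f x - fStar f
  growth_upper : ∃ cu > 0, ∃ Cu > 0, ∀ x : Rd d, f x - fStar f ≤ cu * ‖x‖ ^ u + Cu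

/-- `p_M(s, ℓ) = s + 2` if `ℓ = 0`, and `1` if `ℓ > 0`. -/
def pM (s ℓ : ℝ) : ℝ := if ℓ = 0 then s + 2 else 1

/-- `p_C(s, ℓ) = s + 3` if `ℓ = 0`, and `1` if `ℓ > 0`. -/
def pC (s ℓ : ℝ) : ℝ := if ℓ = 0 then s + 3 else 1

theorem aux_exp_diff (a b : ℝ) :
    |Real.exp a - Real.exp b| ≤ |a - b| * max (Real.exp a) (Real.exp b) := by
  wlog h : b ≤ a generalizing a b with H
  · have := H b a (le_of_not_ge h)
    rwa [abs_sub_comm, abs_sub_comm b a, max_comm] at this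
  rw [max_eq_left (Real.exp_le_exp.2 h), abs_of_nonneg (sub_nonneg.2 (Real.exp_le_exp.2 h)),
    abs_of_nonneg (sub_nonneg.2 h)]
  have h1 := Real.add_one_le_exp (b - a)
  have h2 : Real.exp b = Real.exp (b - a) * Real.exp a := by rw [← Real.exp_add]; congr 1; ring
  nlinarith [Real.exp_pos a]

theorem aux_bdd (k l b : ℝ) (hk : 0 ≤ k) (hl : 0 < l) (hb : 0 < b) :
    ∃ B > 0, ∀ t : ℝ, 0 ≤ t → (2 + 2 * t) ^ k * Real.exp (-(b * t ^ l)) ≤ B := by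
  obtain ⟨n, hn⟩ := exists_nat_ge (k / l)
  refine ⟨4 ^ k * (2 + n.factorial / b ^ n), by positivity, fun t ht => ?_⟩
  have h1 : (2 + 2 * t) ^ k ≤ 4 ^ k * (1 + t ^ k) := by
    rcases le_total t 1 with h | h
    · calc (2 + 2 * t) ^ k ≤ 4 ^ k := Real.rpow_le_rpow (by positivity) (by linarith) hk
        _ ≤ _ := le_mul_of_one_le_right (by positivity) (by
          have := Real.rpow_nonneg ht k
          linarith)
    · calc (2 + 2 * t) ^ k ≤ (4 * t) ^ k := Real.rpow_le_rpow (by positivity) (by linarith) hk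
        _ = 4 ^ k * t ^ k := Real.mul_rpow (by norm_num) ht
        _ ≤ _ := by gcongr; linarith
  have h2 : t ^ k ≤ 1 + (t ^ l) ^ n := by
    rcases le_total t 1 with h | h
    · have := Real.rpow_le_one ht h hk
      have : 0 ≤ (t ^ l) ^ n := by positivity
      linarith
    · have : t ^ k ≤ t ^ (l * n) := Real.rpow_le_rpow_of_exponent_le h (by
        rw [div_le_iff₀ hl] at hn; linarith)
      rw [Real.rpow_mul ht, Real.rpow_natCast] at this
      linarith
  set v := t ^ l with hv
  have hv0 : 0 ≤ v := by positivity
  have h3 : v ^ n * Real.exp (-(b * v)) ≤ n.factorial / b ^ n := by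
    have := Real.pow_div_factorial_le_exp (b * v) (by positivity) n
    rw [Real.exp_neg, ← div_eq_mul_inv, div_le_div_iff₀ (Real.exp_pos _) (by positivity)]
    rw [div_le_iff₀ (by positivity), mul_pow] at this
    linarith
  have h4 : Real.exp (-(b * v)) ≤ 1 := Real.exp_le_one_iff.2 (by
    have : 0 ≤ b * v := by positivity
    linarith)
  calc (2 + 2 * t) ^ k * Real.exp (-(b * v))
      ≤ (4 ^ k * (2 + v ^ n)) * Real.exp (-(b * v)) := by
        gcongr
        refine h1.trans (mul_le_mul_of_nonneg_left ?_ (by positivity))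
        linarith
    _ = 4 ^ k * (2 * Real.exp (-(b * v)) + v ^ n * Real.exp (-(b * v))) := by ring
    _ ≤ _ := by gcongr; linarith

theorem aux_smul_diff {d : ℕ} (w : Rd d → ℝ) (hw : ∀ x, 0 < w x) (x y : Rd d) :
    ‖w x • x - w y • y‖ ≤ w x * ‖x - y‖ + |w x - w y| * ‖y‖ := by
  have : w x • x - w y • y = w x • (x - y) + (w x - w y) • y := by
    rw [smul_sub, sub_smul]; abel
  rw [this]
  refine (norm_add_le _ _).trans ?_
  rw [norm_smul, norm_smul, Real.norm_eq_abs, Real.norm_eq_abs, abs_of_pos (hw x)]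

theorem aux_pointwise
    (β : ℝ) (hβ : 0 < β) (d : ℕ)
    (s ℓ u : ℝ) (hs : 0 ≤ s) (hℓ : 0 ≤ ℓ)
    (f : Rd d → ℝ) (hf : ClassA s ℓ u f)
    (p : ℝ) (hp : pM s ℓ ≤ p) :
    1 ≤ p ∧ ∃ C > 0, ∀ x y : Rd d,
      |wFn β f x - wFn β f y| ≤ C * (‖x - y‖ * (1 + ‖x‖ + ‖y‖) ^ (p - 1)) ∧
      ‖wFn β f x • x - wFn β f y • y‖ ≤ C * (‖x - y‖ * (1 + ‖x‖ + ‖y‖) ^ (p - 1)) := by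
  obtain ⟨Lf, hLf, hlip⟩ := hf.lip
  have hw : ∀ x, 0 < wFn β f x := fun x => Real.exp_pos _
  have hdiff : ∀ x y : Rd d, |wFn β f x - wFn β f y| ≤
      β * Lf * (1 + ‖x‖ + ‖y‖) ^ s * ‖x - y‖ * max (wFn β f x) (wFn β f y) := by
    intro x y
    refine (aux_exp_diff _ _).trans ?_
    have : |-β * f x - -β * f y| ≤ β * Lf * (1 + ‖x‖ + ‖y‖) ^ s * ‖x - y‖ := by
      rw [← mul_sub, abs_mul, abs_neg, abs_of_pos hβ]
      calc _ ≤ β * (Lf * (1 + ‖x‖ + ‖y‖) ^ s * ‖x - y‖) := by gcongr; exact hlip x y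
        _ = _ := by ring
    exact mul_le_mul_of_nonneg_right this (le_max_of_le_left (hw x).le)
  have hfs : ∀ x, fStar f ≤ f x := fun x => csInf_le hf.bddBelow ⟨x, rfl⟩
  by_cases h0 : ℓ = 0
  · have hp' : s + 2 ≤ p := by simpa [pM, h0] using hp
    refine ⟨by linarith, ?_⟩
    set W := Real.exp (-β * fStar f) with hW
    have hWp : 0 < W := Real.exp_pos _
    have hwW : ∀ x, wFn β f x ≤ W := fun x => Real.exp_le_exp.2 (by
      have := hfs x
      nlinarith)
    refine ⟨W + β * Lf * W, by positivity, fun x y => ?_⟩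
    set D := 1 + ‖x‖ + ‖y‖ with hD
    have hx := norm_nonneg x
    have hy := norm_nonneg y
    have hD1 : 1 ≤ D := by linarith
    have hDs : D ^ s * D ≤ D ^ (p - 1) := by
      rw [← Real.rpow_add_one (by linarith)]
      exact Real.rpow_le_rpow_of_exponent_le hD1 (by linarith)
    have hDp : 1 ≤ D ^ (p - 1) := Real.one_le_rpow hD1 (by linarith)
    have hDs0 : 0 ≤ D ^ s := by positivity
    have hxy := norm_nonneg (x - y)
    have h1 : |wFn β f x - wFn β f y| ≤ β * Lf * W * ‖x - y‖ * D ^ s := by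
      refine (hdiff x y).trans ?_
      calc _ ≤ β * Lf * D ^ s * ‖x - y‖ * W := by
            gcongr; exact max_le (hwW x) (hwW y)
        _ = _ := by ring
    have h2 : |wFn β f x - wFn β f y| * D ≤ β * Lf * W * ‖x - y‖ * D ^ (p - 1) := by
      calc _ ≤ β * Lf * W * ‖x - y‖ * D ^ s * D := by gcongr
        _ = β * Lf * W * ‖x - y‖ * (D ^ s * D) := by ring
        _ ≤ _ := by gcongr
    have h3 : 0 ≤ W * (‖x - y‖ * D ^ (p - 1)) := by positivity
    have h4 := abs_nonneg (wFn β f x - wFn β f y)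
    constructor
    · nlinarith
    · refine (aux_smul_diff _ hw x y).trans ?_
      have h5 : wFn β f x * ‖x - y‖ ≤ W * (‖x - y‖ * D ^ (p - 1)) := by
        gcongr
        · exact hwW x
        · exact le_mul_of_one_le_right hxy hDp
      have h6 : |wFn β f x - wFn β f y| * ‖y‖ ≤ |wFn β f x - wFn β f y| * D := by
        gcongr; linarith
      linarith
  · have hp' : 1 ≤ p := by simpa [pM, h0] using hp
    refine ⟨hp', ?_⟩
    have hl : 0 < ℓ := lt_of_le_of_ne hℓ (Ne.symm h0)
    obtain ⟨cl, hcl, Cl, hCl, hgl⟩ := hf.growth_lower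
    obtain ⟨B0, hB0, hB0'⟩ := aux_bdd (s + 1) ℓ (β * cl) (by linarith) hl (by positivity)
    set K := Real.exp (β * Cl - β * fStar f) with hK
    have hKp : 0 < K := Real.exp_pos _
    have hBx : ∀ x : Rd d, (2 + 2 * ‖x‖) ^ (s + 1) * wFn β f x ≤ K * B0 := by
      intro x
      have h1 : wFn β f x ≤ K * Real.exp (-(β * cl * ‖x‖ ^ ℓ)) := by
        rw [hK, ← Real.exp_add]
        refine Real.exp_le_exp.2 ?_
        have := hgl x
        nlinarith
      calc _ ≤ (2 + 2 * ‖x‖) ^ (s + 1) * (K * Real.exp (-(β * cl * ‖x‖ ^ ℓ))) := by gcongr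
        _ = K * ((2 + 2 * ‖x‖) ^ (s + 1) * Real.exp (-(β * cl * ‖x‖ ^ ℓ))) := by ring
        _ ≤ _ := by gcongr; exact hB0' _ (norm_nonneg x)
    set B := K * B0 with hB
    have hBp : 0 < B := by positivity
    have hDle : ∀ x : Rd d, ∀ D, 1 ≤ D → D ≤ 2 + 2 * ‖x‖ → D ^ s * D * wFn β f x ≤ B := by
      intro x D h1 h2
      rw [← Real.rpow_add_one (by linarith)]
      refine le_trans ?_ (hBx x)
      have := (hw x).le
      gcongr
    have hone : ∀ x : Rd d, wFn β f x * (1 + ‖x‖) ≤ B := by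
      intro x
      have hx := norm_nonneg x
      have h1 := hDle x (1 + ‖x‖) (by linarith) (by linarith)
      have h2 : 1 ≤ (1 + ‖x‖) ^ s := Real.one_le_rpow (by linarith) hs
      have h3 : 0 ≤ wFn β f x * (1 + ‖x‖) := mul_nonneg (hw x).le (by linarith)
      nlinarith
    refine ⟨2 * B + β * Lf * B, by positivity, fun x y => ?_⟩
    set D := 1 + ‖x‖ + ‖y‖ with hD
    have hx := norm_nonneg x
    have hy := norm_nonneg y
    have hD1 : 1 ≤ D := by linarith
    have hDp : 1 ≤ D ^ (p - 1) := Real.one_le_rpow hD1 (by linarith)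
    have hxy := norm_nonneg (x - y)
    suffices H : |wFn β f x - wFn β f y| ≤ (2 * B + β * Lf * B) * ‖x - y‖ ∧
        ‖wFn β f x • x - wFn β f y • y‖ ≤ (2 * B + β * Lf * B) * ‖x - y‖ by
      have h7 : (2 * B + β * Lf * B) * ‖x - y‖ ≤
          (2 * B + β * Lf * B) * (‖x - y‖ * D ^ (p - 1)) := by
        gcongr
        exact le_mul_of_one_le_right hxy hDp
      exact ⟨H.1.trans h7, H.2.trans h7⟩
    have hox := hone x
    have hoy := hone y
    have hwx := hw x
    have hwy := hw y
    have hwxx := mul_nonneg hwx.le hx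
    have hwyy := mul_nonneg hwy.le hy
    have hLB : 0 ≤ β * Lf * B * ‖x - y‖ := by positivity
    have hBB : 0 ≤ B * ‖x - y‖ := by positivity
    rcases le_total ‖x - y‖ 1 with h | h
    · have hxy1 : ‖x‖ ≤ ‖y‖ + 1 := by
        have := norm_le_norm_add_norm_sub' x y
        linarith
      have hxy2 : ‖y‖ ≤ ‖x‖ + 1 := by
        have := norm_le_norm_add_norm_sub x y
        linarith
      have hmax : D ^ s * D * max (wFn β f x) (wFn β f y) ≤ B := by
        rcases max_choice (wFn β f x) (wFn β f y) with e | e <;> rw [e]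
        · exact hDle x D hD1 (by linarith)
        · exact hDle y D hD1 (by linarith)
      have h2 : |wFn β f x - wFn β f y| * D ≤ β * Lf * B * ‖x - y‖ := by
        calc _ ≤ (β * Lf * D ^ s * ‖x - y‖ * max (wFn β f x) (wFn β f y)) * D := by
              gcongr; exact hdiff x y
          _ = β * Lf * ‖x - y‖ * (D ^ s * D * max (wFn β f x) (wFn β f y)) := by ring
          _ ≤ β * Lf * ‖x - y‖ * B := by gcongr
          _ = _ := by ring
      have h4 := abs_nonneg (wFn β f x - wFn β f y)
      constructor
      · nlinarith
      · refine (aux_smul_diff _ hw x y).trans ?_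
        have h5 : wFn β f x * ‖x - y‖ ≤ B * ‖x - y‖ := by
          gcongr
          linarith
        have h6 : |wFn β f x - wFn β f y| * ‖y‖ ≤ |wFn β f x - wFn β f y| * D := by
          gcongr; linarith
        linarith
    · have h8 : 2 * B ≤ (2 * B + β * Lf * B) * ‖x - y‖ := by nlinarith
      constructor
      · refine le_trans ?_ h8
        rw [abs_le]; constructor <;> linarith
      · refine le_trans ((norm_sub_le _ _).trans ?_) h8
        rw [norm_smul, norm_smul, Real.norm_eq_abs, Real.norm_eq_abs, abs_of_pos hwx,
          abs_of_pos hwy]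
        linarith

theorem aux_mom {d : ℕ} (p R : ℝ) (hp : 1 ≤ p) (hR : 0 < R) (μ : Measure (Rd d))
    [IsProbabilityMeasure μ] (h : MomLE p R μ) :
    Integrable (fun x : Rd d => ‖x‖ ^ p) μ ∧ ∫ x, ‖x‖ ^ p ∂μ ≤ R ^ p ∧
      Integrable (fun x : Rd d => ‖x‖) μ ∧ ∫ x, ‖x‖ ∂μ ≤ 1 + R ^ p := by
  have hp0 : 0 ≤ p := by linarith
  have hcont : Continuous (fun x : Rd d => ‖x‖ ^ p) :=
    continuous_norm.rpow_const (fun _ => Or.inr hp0)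
  have heq : ∀ x : Rd d, (‖x‖₊ : ℝ≥0∞) ^ p = ENNReal.ofReal (‖x‖ ^ p) := by
    intro x
    rw [← ENNReal.ofReal_rpow_of_nonneg (norm_nonneg x) hp0, ofReal_norm]; rfl
  unfold MomLE at h
  simp_rw [heq] at h
  have hi : Integrable (fun x : Rd d => ‖x‖ ^ p) μ := by
    refine ⟨hcont.aestronglyMeasurable, ?_⟩
    rw [hasFiniteIntegral_iff_ofReal (ae_of_all _ fun x => by positivity)]
    exact h.trans_lt ENNReal.ofReal_lt_top
  have hle : ∀ x : Rd d, ‖x‖ ≤ 1 + ‖x‖ ^ p := by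
    intro x
    have h0 : 0 ≤ ‖x‖ ^ p := by positivity
    rcases le_total ‖x‖ 1 with h1 | h1
    · linarith
    · have := Real.rpow_le_rpow_of_exponent_le h1 hp
      rw [Real.rpow_one] at this
      linarith
  have hI : ∫ x, ‖x‖ ^ p ∂μ ≤ R ^ p := by
    rw [integral_eq_lintegral_of_nonneg_ae (ae_of_all _ fun x => by positivity)
      hcont.aestronglyMeasurable]
    exact ENNReal.toReal_le_of_le_ofReal (by positivity) h
  have hi1 : Integrable (fun x : Rd d => 1 + ‖x‖ ^ p) μ := (integrable_const 1).add hi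
  have hi2 : Integrable (fun x : Rd d => ‖x‖) μ := by
    refine hi1.mono' continuous_norm.aestronglyMeasurable (ae_of_all _ fun x => ?_)
    rw [norm_norm]; exact hle x
  refine ⟨hi, hI, hi2, ?_⟩
  calc ∫ x, ‖x‖ ∂μ ≤ ∫ x, (1 + ‖x‖ ^ p) ∂μ := integral_mono hi2 hi1 hle
    _ = 1 + ∫ x, ‖x‖ ^ p ∂μ := by rw [integral_add (integrable_const 1) hi]; simp
    _ ≤ _ := by linarith

theorem aux_cont {d : ℕ} (s ℓ u : ℝ) (hs : 0 ≤ s) (f : Rd d → ℝ) (hf : ClassA s ℓ u f) :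
    Continuous f := by
  obtain ⟨Lf, hLf, hlip⟩ := hf.lip
  rw [continuous_iff_continuousAt]
  intro x
  have hc : Continuous (fun y : Rd d => Lf * (1 + ‖y‖ + ‖x‖) ^ s * ‖y - x‖) := by
    refine (continuous_const.mul (Continuous.rpow_const (by fun_prop) fun _ => Or.inr hs)).mul
      (by fun_prop)
  have ht : Filter.Tendsto (fun y : Rd d => Lf * (1 + ‖y‖ + ‖x‖) ^ s * ‖y - x‖) (nhds x)
      (nhds 0) := by
    have := hc.tendsto x
    simpa using this
  refine tendsto_iff_dist_tendsto_zero.2 ?_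
  exact squeeze_zero (fun _ => dist_nonneg) (fun y => by rw [Real.dist_eq]; exact hlip y x) ht

theorem aux_bound (β : ℝ) (hβ : 0 < β) {d : ℕ} (s ℓ u : ℝ) (f : Rd d → ℝ)
    (hf : ClassA s ℓ u f) (x : Rd d) : wFn β f x ≤ Real.exp (-β * fStar f) := by
  refine Real.exp_le_exp.2 ?_
  have : fStar f ≤ f x := csInf_le hf.bddBelow ⟨x, rfl⟩
  nlinarith

theorem aux_wcont (β : ℝ) {d : ℕ} (s ℓ u : ℝ) (hs : 0 ≤ s) (f : Rd d → ℝ)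
    (hf : ClassA s ℓ u f) : Continuous (wFn β f) :=
  Real.continuous_exp.comp (continuous_const.mul (aux_cont s ℓ u hs f hf))

theorem aux_int (β : ℝ) (hβ : 0 < β) {d : ℕ} (s ℓ u : ℝ) (hs : 0 ≤ s) (f : Rd d → ℝ)
    (hf : ClassA s ℓ u f) (μ : Measure (Rd d)) [IsProbabilityMeasure μ] :
    Integrable (wFn β f) μ := by
  refine (integrable_const (Real.exp (-β * fStar f))).mono'
    (aux_wcont β s ℓ u hs f hf).aestronglyMeasurable (ae_of_all _ fun x => ?_)
  rw [Real.norm_eq_abs, abs_of_pos (show 0 < wFn β f x from Real.exp_pos _)]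
  exact aux_bound β hβ s ℓ u f hf x

theorem aux_int' (β : ℝ) (hβ : 0 < β) {d : ℕ} (s ℓ u : ℝ) (hs : 0 ≤ s) (f : Rd d → ℝ)
    (hf : ClassA s ℓ u f) (μ : Measure (Rd d))
    (h : Integrable (fun x : Rd d => ‖x‖) μ) :
    Integrable (fun x => wFn β f x • x) μ ∧
    ‖∫ x, wFn β f x • x ∂μ‖ ≤ Real.exp (-β * fStar f) * ∫ x, ‖x‖ ∂μ := by
  have hle : ∀ x, ‖wFn β f x • x‖ ≤ Real.exp (-β * fStar f) * ‖x‖ := by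
    intro x
    rw [norm_smul, Real.norm_eq_abs, abs_of_pos (show 0 < wFn β f x from Real.exp_pos _)]
    gcongr
    exact aux_bound β hβ s ℓ u f hf x
  have hc := aux_wcont β s ℓ u hs f hf
  refine ⟨(h.const_mul (Real.exp (-β * fStar f))).mono'
    (hc.smul continuous_id).aestronglyMeasurable (ae_of_all _ hle), ?_⟩
  rw [← integral_const_mul]
  exact norm_integral_le_of_norm_le (h.const_mul _) (ae_of_all _ hle)

theorem aux_lower (β : ℝ) (hβ : 0 < β) (d : ℕ)
    (s ℓ u : ℝ) (hs : 0 ≤ s) (hu : 0 ≤ u)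
    (f : Rd d → ℝ) (hf : ClassA s ℓ u f)
    (R : ℝ) (hR : 0 < R) (p : ℝ) (hp : 1 ≤ p) :
    ∃ z > 0, ∀ μ : Measure (Rd d), IsProbabilityMeasure μ → MomLE p R μ →
      z ≤ ∫ x, wFn β f x ∂μ := by
  obtain ⟨cu, hcu, Cu, hCu, hgu⟩ := hf.growth_upper
  set z := Real.exp (-β * (fStar f + cu * (2 * R) ^ u + Cu)) with hz
  have hzp : 0 < z := Real.exp_pos _
  refine ⟨z / 2, by positivity, fun μ hμ hm => ?_⟩
  obtain ⟨hi, hI, -, -⟩ := aux_mom p R hp hR μ hm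
  have hR2 : 0 < (2 * R) ^ p := by positivity
  have hpt : ∀ x : Rd d, z * (1 - ‖x‖ ^ p / (2 * R) ^ p) ≤ wFn β f x := by
    intro x
    have hw : 0 < wFn β f x := Real.exp_pos _
    rcases le_total ‖x‖ (2 * R) with h | h
    · have h1 : z ≤ wFn β f x := by
        refine Real.exp_le_exp.2 ?_
        have h2 := hgu x
        have h3 : cu * ‖x‖ ^ u ≤ cu * (2 * R) ^ u := by gcongr
        nlinarith
      have h4 : 0 ≤ ‖x‖ ^ p / (2 * R) ^ p := by positivity
      nlinarith
    · have h4 : 1 ≤ ‖x‖ ^ p / (2 * R) ^ p := by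
        rw [one_le_div hR2]
        exact Real.rpow_le_rpow (by positivity) h (by linarith)
      nlinarith
  have hint : Integrable (fun x : Rd d => z * (1 - ‖x‖ ^ p / (2 * R) ^ p)) μ :=
    ((integrable_const 1).sub (hi.div_const _)).const_mul z
  refine le_trans ?_ (integral_mono hint (aux_int β hβ s ℓ u hs f hf μ) hpt)
  rw [integral_const_mul, integral_sub (integrable_const 1) (hi.div_const _), integral_div]
  have h5 : (∫ x, ‖x‖ ^ p ∂μ) / (2 * R) ^ p ≤ 1 / 2 := by
    rw [div_le_iff₀ hR2, Real.mul_rpow (by norm_num) hR.le]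
    have h6 : (2 : ℝ) ≤ 2 ^ p := by
      simpa using Real.rpow_le_rpow_of_exponent_le (x := (2 : ℝ)) (by norm_num) hp
    have h7 : 0 < R ^ p := by positivity
    nlinarith
  have h8 : ∫ _ : Rd d, (1 : ℝ) ∂μ = 1 := by simp
  rw [h8]
  nlinarith

theorem aux_Q {d : ℕ} (p R : ℝ) (hp : 1 ≤ p) (hR : 0 < R) (π : Measure (Rd d × Rd d))
    [IsProbabilityMeasure π] (h1 : MomLE p R (π.map Prod.fst)) (h2 : MomLE p R (π.map Prod.snd)) :
    ∫⁻ z, (ENNReal.ofReal (1 + ‖z.1‖ + ‖z.2‖)) ^ p ∂π ≤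
      ENNReal.ofReal (3 ^ p * (1 + R ^ p + R ^ p)) := by
  have hp0 : 0 ≤ p := by linarith
  unfold MomLE at h1 h2
  have hm : Measurable (fun x : Rd d => (‖x‖₊ : ℝ≥0∞) ^ p) := by fun_prop
  rw [lintegral_map hm measurable_fst] at h1
  rw [lintegral_map hm measurable_snd] at h2
  have hpt : ∀ z : Rd d × Rd d, (ENNReal.ofReal (1 + ‖z.1‖ + ‖z.2‖)) ^ p ≤
      ENNReal.ofReal (3 ^ p) * (1 + (‖z.1‖₊ : ℝ≥0∞) ^ p + (‖z.2‖₊ : ℝ≥0∞) ^ p) := by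
    intro z
    have e : ∀ x : Rd d, (‖x‖₊ : ℝ≥0∞) = ENNReal.ofReal ‖x‖ := by
      intro x; rw [ofReal_norm]; rfl
    rw [e, e, ENNReal.ofReal_rpow_of_nonneg (by positivity) hp0,
      ENNReal.ofReal_rpow_of_nonneg (by positivity) hp0,
      ENNReal.ofReal_rpow_of_nonneg (by positivity) hp0, ← ENNReal.ofReal_one,
      ← ENNReal.ofReal_add (by positivity) (by positivity),
      ← ENNReal.ofReal_add (by positivity) (by positivity),
      ← ENNReal.ofReal_mul (by positivity)]
    refine ENNReal.ofReal_le_ofReal ?_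
    have a0 := norm_nonneg z.1
    have b0 := norm_nonneg z.2
    generalize ‖z.1‖ = a at *
    generalize ‖z.2‖ = b at *
    have hap : 0 ≤ a ^ p := by positivity
    have hbp : 0 ≤ b ^ p := by positivity
    have key : ∀ m : ℝ, 0 ≤ m → 1 ≤ m → a ≤ m → b ≤ m → m ^ p ≤ 1 + a ^ p + b ^ p →
        (1 + a + b) ^ p ≤ 3 ^ p * (1 + a ^ p + b ^ p) := by
      intro m m0 m1 am bm hmp
      calc (1 + a + b) ^ p ≤ (3 * m) ^ p :=
            Real.rpow_le_rpow (by positivity) (by linarith) hp0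
        _ = 3 ^ p * m ^ p := Real.mul_rpow (by norm_num) m0
        _ ≤ _ := by gcongr
    rcases le_total a 1 with h | h <;> rcases le_total b 1 with h' | h'
    · exact key 1 zero_le_one le_rfl h h' (by rw [Real.one_rpow]; linarith)
    · exact key b b0 h' (h.trans h') le_rfl (by linarith)
    · exact key a a0 h le_rfl (h'.trans h) (by linarith)
    · rcases le_total a b with h'' | h''
      · exact key b b0 h' h'' le_rfl (by linarith)
      · exact key a a0 h le_rfl h'' (by linarith)
  refine (lintegral_mono hpt).trans ?_
  rw [lintegral_const_mul _ (by fun_prop), lintegral_add_right _ (by fun_prop),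
    lintegral_add_right _ (by fun_prop), ENNReal.ofReal_mul (by positivity),
    ENNReal.ofReal_add (by positivity) (by positivity),
    ENNReal.ofReal_add (by positivity) (by positivity)]
  simp only [lintegral_const, measure_univ, mul_one, ENNReal.ofReal_one]
  gcongr

theorem aux_holder {d : ℕ} (p : ℝ) (hp : 1 ≤ p) (π : Measure (Rd d × Rd d)) :
    ∫⁻ z, ENNReal.ofReal (‖z.1 - z.2‖ * (1 + ‖z.1‖ + ‖z.2‖) ^ (p - 1)) ∂π ≤
      (∫⁻ z, (‖z.1 - z.2‖₊ : ℝ≥0∞) ^ p ∂π) ^ (1 / p) *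
      (∫⁻ z, (ENNReal.ofReal (1 + ‖z.1‖ + ‖z.2‖)) ^ p ∂π) ^ (1 - 1 / p) := by
  have hp0 : 0 < p := by linarith
  have h1 : 1 / p ≤ 1 := by rw [div_le_one hp0]; exact hp
  refine le_trans (le_of_eq ?_) (ENNReal.lintegral_mul_norm_pow_le (by fun_prop) (by fun_prop)
    (by positivity) (sub_nonneg.2 h1) (by ring))
  refine lintegral_congr fun z => ?_
  have e : (‖z.1 - z.2‖₊ : ℝ≥0∞) = ENNReal.ofReal ‖z.1 - z.2‖ := by
    rw [ofReal_norm]; rfl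
  rw [e, ← ENNReal.rpow_mul, ← ENNReal.rpow_mul, mul_one_div_cancel hp0.ne', ENNReal.rpow_one,
    ENNReal.ofReal_mul (norm_nonneg _), ← ENNReal.ofReal_rpow_of_nonneg (by positivity)
      (by linarith)]
  congr 2
  field_simp

theorem aux_coupling {d : ℕ} {E : Type*} [NormedAddCommGroup E] [NormedSpace ℝ E]
    (p R C : ℝ) (hp : 1 ≤ p) (hR : 0 < R) (hC : 0 < C) (π : Measure (Rd d × Rd d))
    [IsProbabilityMeasure π] (h1 : MomLE p R (π.map Prod.fst)) (h2 : MomLE p R (π.map Prod.snd))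
    (h : Rd d → E)
    (hi1 : Integrable h (π.map Prod.fst)) (hi2 : Integrable h (π.map Prod.snd))
    (hb : ∀ x y, ‖h x - h y‖ ≤ C * (‖x - y‖ * (1 + ‖x‖ + ‖y‖) ^ (p - 1)))
    (c : ℝ) (hc0 : 0 ≤ c)
    (hc : (∫⁻ z, (‖z.1 - z.2‖₊ : ℝ≥0∞) ^ p ∂π) ^ (1 / p) = ENNReal.ofReal c) :
    ‖∫ x, h x ∂(π.map Prod.fst) - ∫ x, h x ∂(π.map Prod.snd)‖ ≤
      C * (c * (3 ^ p * (1 + R ^ p + R ^ p)) ^ (1 - 1 / p)) := by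
  have hp0 : 0 < p := by linarith
  have h1p : 1 / p ≤ 1 := by rw [div_le_one hp0]; exact hp
  rw [integral_map measurable_fst.aemeasurable hi1.aestronglyMeasurable,
    integral_map measurable_snd.aemeasurable hi2.aestronglyMeasurable,
    ← integral_sub (f := fun z : Rd d × Rd d => h z.1) (g := fun z : Rd d × Rd d => h z.2)
      (hi1.comp_measurable measurable_fst) (hi2.comp_measurable measurable_snd)]
  have hle : ‖∫ z, (h z.1 - h z.2) ∂π‖ₑ ≤
      ENNReal.ofReal (C * (c * (3 ^ p * (1 + R ^ p + R ^ p)) ^ (1 - 1 / p))) := by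
    refine (enorm_integral_le_lintegral_enorm _).trans ?_
    calc ∫⁻ z, ‖h z.1 - h z.2‖ₑ ∂π
        ≤ ∫⁻ z, ENNReal.ofReal C *
            ENNReal.ofReal (‖z.1 - z.2‖ * (1 + ‖z.1‖ + ‖z.2‖) ^ (p - 1)) ∂π := by
          refine lintegral_mono fun z => ?_
          rw [← ENNReal.ofReal_mul hC.le, ← ofReal_norm]
          exact ENNReal.ofReal_le_ofReal (hb _ _)
      _ = ENNReal.ofReal C *
          ∫⁻ z, ENNReal.ofReal (‖z.1 - z.2‖ * (1 + ‖z.1‖ + ‖z.2‖) ^ (p - 1)) ∂π := by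
          rw [lintegral_const_mul' _ _ ENNReal.ofReal_ne_top]
      _ ≤ ENNReal.ofReal C * (ENNReal.ofReal c *
          (ENNReal.ofReal (3 ^ p * (1 + R ^ p + R ^ p))) ^ (1 - 1 / p)) := by
          refine mul_le_mul_right ((aux_holder p hp π).trans ?_) _
          rw [hc]
          exact mul_le_mul_right (ENNReal.rpow_le_rpow (aux_Q p R hp hR π h1 h2)
            (sub_nonneg.2 h1p)) _
      _ = _ := by
          rw [ENNReal.ofReal_mul hC.le, ENNReal.ofReal_mul hc0,
            ENNReal.ofReal_rpow_of_nonneg (by positivity) (sub_nonneg.2 h1p)]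
  rw [← ofReal_norm] at hle
  exact (ENNReal.ofReal_le_ofReal_iff (by positivity)).1 hle

theorem aux_algebra {E : Type*} [NormedAddCommGroup E] [NormedSpace ℝ E]
    (z a b T K : ℝ) (n m : E) (hz : 0 < z) (ha : z ≤ a) (hb : z ≤ b)
    (h1 : ‖n - m‖ ≤ T) (h2 : |a - b| ≤ T) (h3 : ‖m‖ ≤ K) :
    ‖a⁻¹ • n - b⁻¹ • m‖ ≤ z⁻¹ * (1 + z⁻¹ * K) * T := by
  have ha0 : 0 < a := by linarith
  have hb0 : 0 < b := by linarith
  have hT : 0 ≤ T := (norm_nonneg _).trans h1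
  have hK : 0 ≤ K := (norm_nonneg _).trans h3
  have e : a⁻¹ • n - b⁻¹ • m = a⁻¹ • (n - m) + (a⁻¹ * b⁻¹ * (b - a)) • m := by
    have : a⁻¹ * b⁻¹ * (b - a) = a⁻¹ - b⁻¹ := by field_simp
    rw [this, smul_sub, sub_smul]; abel
  rw [e]
  refine (norm_add_le _ _).trans ?_
  rw [norm_smul, norm_smul, Real.norm_eq_abs, Real.norm_eq_abs, abs_mul, abs_mul,
    abs_of_pos (inv_pos.2 ha0), abs_of_pos (inv_pos.2 hb0), abs_sub_comm]
  have ia : a⁻¹ ≤ z⁻¹ := inv_anti₀ hz ha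
  have ib : b⁻¹ ≤ z⁻¹ := inv_anti₀ hz hb
  calc _ ≤ z⁻¹ * T + z⁻¹ * z⁻¹ * T * K := by gcongr
    _ = _ := by ring

/-- **Basic Wasserstein stability estimate for the weighted mean.**
If `f ∈ A(s, ℓ, u)`, then for every `R > 0` and `p ≥ p_M(s, ℓ)` there is `L_M > 0`
such that `|M_β(μ) - M_β(ν)| ≤ L_M ⬝ W_p(μ, ν)` for all `μ, ν ∈ P_{p,R}(ℝ^d)`. -/
theorem weighted_mean_stability
    (β : ℝ) (hβ : 0 < β) (d : ℕ) (hd : 1 ≤ d)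
    (s ℓ u : ℝ) (hs : 0 ≤ s) (hℓ : 0 ≤ ℓ) (hℓu : ℓ ≤ u)
    (f : Rd d → ℝ) (hf : ClassA s ℓ u f)
    (R : ℝ) (hR : 0 < R) (p : ℝ) (hp : pM s ℓ ≤ p) :
    ∃ L > 0, ∀ μ ν : Measure (Rd d),
      IsProbabilityMeasure μ → IsProbabilityMeasure ν →
      MomLE p R μ → MomLE p R ν →
      ‖wMean β f μ - wMean β f ν‖ ≤ L * Wp p μ ν := by
  obtain ⟨hp1, C, hC, hpt⟩ := aux_pointwise β hβ d s ℓ u hs hℓ f hf p hp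
  obtain ⟨z, hz, hzl⟩ := aux_lower β hβ d s ℓ u hs (hℓ.trans hℓu) f hf R hR p hp1
  set K := Real.exp (-β * fStar f) * (1 + R ^ p) with hK
  have hKp : 0 < K := by positivity
  set q := (3 ^ p * (1 + R ^ p + R ^ p)) ^ (1 - 1 / p) with hq
  have hqp : 0 < q := by positivity
  refine ⟨z⁻¹ * (1 + z⁻¹ * K) * (C * q), by positivity, fun μ ν hμ hν hmμ hmν => ?_⟩
  set L := z⁻¹ * (1 + z⁻¹ * K) * (C * q) with hL
  have hLp : 0 < L := by positivity
  unfold Wp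
  set S := {c : ℝ≥0∞ | ∃ π : Measure (Rd d × Rd d),
      π.map Prod.fst = μ ∧ π.map Prod.snd = ν ∧
      c = (∫⁻ z, (‖z.1 - z.2‖₊ : ℝ≥0∞) ^ p ∂π) ^ (1 / p)} with hS
  have hp0 : 0 < p := by linarith
  have hlow : ENNReal.ofReal (‖wMean β f μ - wMean β f ν‖ / L) ≤ sInf S := by
    refine le_sInf ?_
    rintro c ⟨π, hπ1, hπ2, hc⟩
    have hπ : IsProbabilityMeasure π := by
      constructor
      have := hμ.measure_univ
      rwa [← hπ1, Measure.map_apply measurable_fst MeasurableSet.univ, Set.preimage_univ] at this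
    by_cases hct : c = ⊤
    · rw [hct]; exact le_top
    rw [← ENNReal.ofReal_toReal hct]
    refine ENNReal.ofReal_le_ofReal ?_
    rw [div_le_iff₀ hLp]
    have hc' := hc.symm.trans (ENNReal.ofReal_toReal hct).symm
    obtain ⟨-, -, hiμ, hIμ⟩ := aux_mom p R hp1 hR μ hmμ
    obtain ⟨-, -, hiν, hIν⟩ := aux_mom p R hp1 hR ν hmν
    have hNμ := aux_int' β hβ s ℓ u hs f hf μ hiμ
    have hNν := aux_int' β hβ s ℓ u hs f hf ν hiν
    have hZμ := aux_int β hβ s ℓ u hs f hf μ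
    have hZν := aux_int β hβ s ℓ u hs f hf ν
    have hzμ := hzl μ hμ hmμ
    have hzν := hzl ν hν hmν
    have hm : ‖∫ x, wFn β f x • x ∂ν‖ ≤ K := hNν.2.trans (by rw [hK]; gcongr)
    have hA : ‖∫ x, wFn β f x • x ∂μ - ∫ x, wFn β f x • x ∂ν‖ ≤ C * (c.toReal * q) := by
      have := aux_coupling p R C hp1 hR hC π (hπ1 ▸ hmμ) (hπ2 ▸ hmν) (fun x => wFn β f x • x)
        (hπ1 ▸ hNμ.1) (hπ2 ▸ hNν.1) (fun x y => (hpt x y).2) c.toReal ENNReal.toReal_nonneg hc'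
      rwa [hπ1, hπ2] at this
    have hB : |∫ x, wFn β f x ∂μ - ∫ x, wFn β f x ∂ν| ≤ C * (c.toReal * q) := by
      have := aux_coupling p R C hp1 hR hC π (hπ1 ▸ hmμ) (hπ2 ▸ hmν) (wFn β f)
        (hπ1 ▸ hZμ) (hπ2 ▸ hZν) (fun x y => (hpt x y).1) c.toReal ENNReal.toReal_nonneg hc'
      rwa [hπ1, hπ2] at this
    have := aux_algebra z _ _ _ K _ _ hz hzμ hzν hA hB hm
    unfold wMean
    refine this.trans (le_of_eq ?_)
    rw [hL]; ring
  have htop : sInf S ≠ ⊤ := by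
    have h1 : (μ.prod ν).map Prod.fst = μ := by simp
    have h2 : (μ.prod ν).map Prod.snd = ν := by simp
    refine ne_top_of_le_ne_top ?_ (sInf_le ⟨μ.prod ν, h1, h2, rfl⟩)
    refine ENNReal.rpow_ne_top_of_nonneg (by positivity) ?_
    refine ne_top_of_le_ne_top ENNReal.ofReal_ne_top
      (le_trans (lintegral_mono fun z => ?_)
        (aux_Q p R hp1 hR (μ.prod ν) (h1.symm ▸ hmμ) (h2.symm ▸ hmν)))
    refine ENNReal.rpow_le_rpow ?_ hp0.le
    have e : (‖z.1 - z.2‖₊ : ℝ≥0∞) = ENNReal.ofReal ‖z.1 - z.2‖ := by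
      rw [ofReal_norm]; rfl
    rw [e]
    refine ENNReal.ofReal_le_ofReal ((norm_sub_le _ _).trans ?_)
    linarith
  have := (ENNReal.ofReal_le_iff_le_toReal htop).1 hlow
  rw [div_le_iff₀ hLp] at this
  linarith

end
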